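/- (Sufficiency, time-invariant networks.) Consider a time-invariant network modeled by a digraph D = (V, E) under the f-fraction local Byzantine model, where each normal node updates its value according to ARC-P with parameter f ∈ [0,1/2). If the network topology D is p-fraction robust for some p with 2f < p ≤ 1, then the normal agents achieve continuous-time resilient asymptotic consensus (CTRAC): for every choice of initial values and every admissible behavior of the Byzantine adversaries, all normal states converge to a common limit L ∈ ℝ and remain in [m_N(0), M_N(0)] for all t ≥ 0. -/

import Mathlib

open Finset Filter Topology MeasureTheory

namespace ARCP

variable {n : ℕ}

/-- `R` is a valid ARC-P removal of the (up to) `F` largest neighboring values. -/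
def RemovalHigh (Nin : Finset (Fin n)) (v : Fin n → ℝ) (xi : ℝ) (F : ℕ)
    (R : Finset (Fin n)) : Prop :=
  R ⊆ Nin ∧
    (((Nin.filter fun j => xi < v j).card < F ∧ R = Nin.filter fun j => xi < v j) ∨
      (F ≤ (Nin.filter fun j => xi < v j).card ∧ R.card = F ∧
        ∀ j ∈ R, ∀ k ∈ Nin \ R, v k ≤ v j))

/-- `R` is a valid ARC-P removal of the (up to) `F` smallest neighboring values. -/
def RemovalLow (Nin : Finset (Fin n)) (v : Fin n → ℝ) (xi : ℝ) (F : ℕ)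
    (R : Finset (Fin n)) : Prop :=
  R ⊆ Nin ∧
    (((Nin.filter fun j => v j < xi).card < F ∧ R = Nin.filter fun j => v j < xi) ∨
      (F ≤ (Nin.filter fun j => v j < xi).card ∧ R.card = F ∧
        ∀ j ∈ R, ∀ k ∈ Nin \ R, v j ≤ v k))

/-- `R` is a valid set of in-neighbors removed by the ARC-P rule with threshold `F`. -/
def IsARCPRemoval (Nin : Finset (Fin n)) (v : Fin n → ℝ) (xi : ℝ) (F : ℕ)
    (R : Finset (Fin n)) : Prop :=
  ∃ Rhi Rlo : Finset (Fin n),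
    R = Rhi ∪ Rlo ∧ RemovalHigh Nin v xi F Rhi ∧ RemovalLow Nin v xi F Rlo

/-- The ARC-P control input: `∑_{j ∈ Nin \ R} w j * (v j - xi)`. -/
def arcpUpdate (Nin R : Finset (Fin n)) (w : Fin n → ℝ) (v : Fin n → ℝ) (xi : ℝ) : ℝ :=
  ∑ j ∈ Nin \ R, w j * (v j - xi)

/-- `S` is a `p`-fraction edge reachable set of the digraph with in-neighborhoods `Nin`. -/
def FracEdgeReachable (Nin : Fin n → Finset (Fin n)) (p : ℝ) (S : Finset (Fin n)) : Prop :=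
  (∃ i ∈ S, 0 < (Nin i).card ∧ ⌈p * (((Nin i).card : ℝ))⌉₊ ≤ ((Nin i) \ S).card) ∨
    (p = 0 ∧ ∀ i ∈ S, ((Nin i) \ S).card = 0)

/-- The digraph with in-neighborhoods `Nin` is `p`-fraction robust: for every pair of
nonempty, disjoint subsets of nodes, at least one of them is `p`-fraction edge reachable. -/
def FracRobust (Nin : Fin n → Finset (Fin n)) (p : ℝ) : Prop :=
  ∀ S₁ S₂ : Finset (Fin n), S₁.Nonempty → S₂.Nonempty → Disjoint S₁ S₂ →
    FracEdgeReachable Nin p S₁ ∨ FracEdgeReachable Nin p S₂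

end ARCP

/-!
Normal agents never leave the interval spanned by their own states, because at most `F i` values
exceeding it reach agent `i` and ARC-P discards all of them.
Now let all normal states lie in `[L, U]`. During a window of length `1 / (2 G)`, where `G` bounds
the total weight, an agent at distance `δ` below `U` stays at distance `δ / 2`, while an agent that
hears more than `F i` normal agents at distance `δ` below `U` keeps at least one of those values and
is dragged to distance `ρ δ`, for a constant `ρ` depending only on the weights.
Follow the agents within `ρ ^ k * (U - L) / 2` of `U` and those within the same distance of `L`
after `k` windows. These sets are disjoint and do not grow, and by robustness one of them loses an
agent in every window in which both are nonempty. Hence one of them is empty after as many windows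
as there are normal agents, so the enclosing interval has shrunk by a fixed factor.
-/

namespace ARCP

section Real

lemma exists_first_isMaxOn {g : ℝ → ℝ} {a b : ℝ} (hab : a ≤ b)
    (hg : ContinuousOn g (Set.Icc a b)) :
    ∃ s ∈ Set.Icc a b, IsMaxOn g (Set.Icc a b) s ∧ ∀ r ∈ Set.Ico a s, g r < g s := by
  obtain ⟨m, hm, hmax⟩ := isCompact_Icc.exists_isMaxOn ⟨a, le_rfl, hab⟩ hg
  have hcompact : IsCompact (Set.Icc a b ∩ g ⁻¹' Set.Ici (g m)) :=
    isCompact_Icc.of_isClosed_subset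
      (hg.preimage_isClosed_of_isClosed isClosed_Icc isClosed_Ici) Set.inter_subset_left
  obtain ⟨s, ⟨hs, hms⟩, hleast⟩ := hcompact.exists_isLeast ⟨m, hm, le_refl (g m)⟩
  refine ⟨s, hs, isMaxOn_iff.2 fun r hr => (isMaxOn_iff.1 hmax r hr).trans hms, fun r hr => ?_⟩
  by_contra! hsr
  exact hr.2.not_ge (hleast ⟨⟨hr.1, hr.2.le.trans hs.2⟩, le_trans hms hsr⟩)

lemma exists_tendsto_of_forall_dist_lt {ι β E : Type*} [Nonempty β] [SemilatticeSup β]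
    [PseudoMetricSpace E] [CompleteSpace E] {s : Set ι} (hs : s.Nonempty)
    {x : ι → β → E}
    (h : ∀ ε > 0, ∃ T, ∀ i ∈ s, ∀ j ∈ s, ∀ t ≥ T, ∀ t' ≥ T, dist (x i t) (x j t') < ε) :
    ∃ L, ∀ i ∈ s, Tendsto (x i) atTop (𝓝 L) := by
  obtain ⟨i₀, hi₀⟩ := hs
  have hcauchy : CauchySeq (x i₀) := Metric.cauchySeq_iff.2 fun ε hε =>
    (h ε hε).imp fun T hT t ht t' ht' => hT i₀ hi₀ i₀ hi₀ t ht t' ht'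
  obtain ⟨L, hL⟩ := cauchySeq_tendsto_of_complete hcauchy
  refine ⟨L, fun i hi => hL.congr_dist (Metric.tendsto_atTop.2 fun ε hε => ?_)⟩
  obtain ⟨T, hT⟩ := h ε hε
  exact ⟨T, fun t ht => by simpa using hT i₀ hi₀ i hi t ht t ht⟩

lemma eq_empty_or_eq_empty_of_ssubset {ι : Type*} {A B : ℕ → Finset ι} {m : ℕ}
    (hA : ∀ k, A (k + 1) ⊆ A k) (hB : ∀ k, B (k + 1) ⊆ B k)
    (hlt : ∀ k, (A k).Nonempty → (B k).Nonempty → A (k + 1) ⊂ A k ∨ B (k + 1) ⊂ B k)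
    (hm : #(A 0) + #(B 0) ≤ m) : A m = ∅ ∨ B m = ∅ := by
  have key : ∀ k, A k = ∅ ∨ B k = ∅ ∨ #(A k) + #(B k) + k ≤ m := by
    intro k
    induction k with
    | zero => exact .inr (.inr hm)
    | succ k ih =>
      rcases (A k).eq_empty_or_nonempty with hAk | hAk
      · exact .inl (subset_empty.1 (hAk ▸ hA k))
      rcases (B k).eq_empty_or_nonempty with hBk | hBk
      · exact .inr (.inl (subset_empty.1 (hBk ▸ hB k)))
      have hcard := (ih.resolve_left hAk.ne_empty).resolve_left hBk.ne_empty
      have hAle := card_le_card (hA k)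
      have hBle := card_le_card (hB k)
      rcases hlt k hAk hBk with h | h
      all_goals
        have := card_lt_card h
        exact .inr (.inr (by omega))
  rcases key m with h | h | h
  · exact .inl h
  · exact .inr h
  · exact .inl (card_eq_zero.1 (by omega))

end Real

/-- `x` is a Carathéodory solution of `ẋ = u` on `[0, ∞)`, in integral form. -/
structure IsCaratheodorySolution (x u : ℝ → ℝ) : Prop where
  intervalIntegrable_zero : ∀ t, 0 ≤ t → IntervalIntegrable u volume 0 t
  eq_add_integral_zero : ∀ t, 0 ≤ t → x t = x 0 + ∫ s in (0 : ℝ)..t, u s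

namespace IsCaratheodorySolution

variable {x u : ℝ → ℝ} {a b c K : ℝ}

lemma neg (h : IsCaratheodorySolution x u) : IsCaratheodorySolution (-x) (-u) where
  intervalIntegrable_zero t ht := (h.intervalIntegrable_zero t ht).neg
  eq_add_integral_zero t ht := by
    simp only [Pi.neg_apply, intervalIntegral.integral_neg, h.eq_add_integral_zero t ht, neg_add]

lemma intervalIntegrable (h : IsCaratheodorySolution x u) (ha : 0 ≤ a) (hb : 0 ≤ b) :
    IntervalIntegrable u volume a b :=
  (h.intervalIntegrable_zero a ha).symm.trans (h.intervalIntegrable_zero b hb)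

lemma eq_add_integral (h : IsCaratheodorySolution x u) (ha : 0 ≤ a) (hb : 0 ≤ b) :
    x b = x a + ∫ s in a..b, u s := by
  rw [h.eq_add_integral_zero a ha, h.eq_add_integral_zero b hb, add_assoc,
    intervalIntegral.integral_add_adjacent_intervals (h.intervalIntegrable_zero a ha)
      (h.intervalIntegrable ha hb)]

lemma continuousOn (h : IsCaratheodorySolution x u) (ha : 0 ≤ a) :
    ContinuousOn x (Set.Icc a b) := by
  intro t ht
  have hb : 0 ≤ b := ha.trans (ht.1.trans ht.2)
  have hprim : ContinuousOn (fun t => x 0 + ∫ s in (0 : ℝ)..t, u s) (Set.Icc 0 b) := by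
    rw [← Set.uIcc_of_le hb]
    exact continuousOn_const.add (intervalIntegral.continuousOn_primitive_interval'
      (h.intervalIntegrable_zero b hb) Set.left_mem_uIcc)
  exact (hprim.congr fun s hs => h.eq_add_integral_zero s hs.1).mono
    (Set.Icc_subset_Icc_left ha) t ht

lemma le_add_mul (h : IsCaratheodorySolution x u) (ha : 0 ≤ a) (hab : a ≤ b)
    (hu : ∀ s ∈ Set.Ioo a b, u s ≤ K) : x b ≤ x a + K * (b - a) := by
  have hint : ∫ s in a..b, u s ≤ ∫ _ in a..b, K :=
    intervalIntegral.integral_mono_on_of_le_Ioo hab (h.intervalIntegrable ha (ha.trans hab))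
      intervalIntegrable_const hu
  rw [intervalIntegral.integral_const, smul_eq_mul, mul_comm] at hint
  rw [h.eq_add_integral ha (ha.trans hab)]
  gcongr

lemma le_add_mul_of_lt_imp_le (h : IsCaratheodorySolution x u) (ha : 0 ≤ a) (hab : a ≤ b)
    (hK : 0 ≤ K) (hxa : x a ≤ c) (hu : ∀ s ∈ Set.Icc a b, c < x s → u s ≤ K) :
    x b ≤ c + K * (b - a) := by
  have hcompact : IsCompact (Set.Icc a b ∩ x ⁻¹' Set.Iic c) :=
    isCompact_Icc.of_isClosed_subset
      ((h.continuousOn ha).preimage_isClosed_of_isClosed isClosed_Icc isClosed_Iic)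
      Set.inter_subset_left
  -- `s` is the last time at which `x ≤ c`.
  obtain ⟨s, ⟨⟨has, hsb⟩, hxs⟩, hlast⟩ := hcompact.exists_isGreatest ⟨a, ⟨le_rfl, hab⟩, hxa⟩
  have hafter : ∀ r ∈ Set.Ioo s b, u r ≤ K := fun r hr =>
    have hr' : r ∈ Set.Icc a b := ⟨has.trans hr.1.le, hr.2.le⟩
    hu r hr' (not_le.1 fun hxr => hr.1.not_ge (hlast ⟨hr', hxr⟩))
  calc x b ≤ x s + K * (b - s) := h.le_add_mul (ha.trans has) hsb hafter
    _ ≤ c + K * (b - a) := by gcongr; exact hxs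

end IsCaratheodorySolution

/-- One-sided drift estimates for agents `N` with states `x` and drifts `u`, all that consensus
needs to know about ARC-P: an agent approaches an upper bound `U` of all states no faster than at
rate `G`, and is pulled at rate `α` towards any level `c` below it that dominates more than `F i`
of its in-neighbors in `N`. The mirror estimate is the same one for `-x`. -/
structure UpperDriftBound {ι : Type*} (N : Finset ι) (Nin : ι → Finset ι) (F : ι → ℕ)
    (α G : ℝ) (x u : ι → ℝ → ℝ) : Prop where
  pull_pos : 0 < α
  rate_pos : 0 < G
  isSolution : ∀ i ∈ N, IsCaratheodorySolution (x i) (u i)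
  drift_le : ∀ i ∈ N, ∀ t U, 0 ≤ t → (∀ j ∈ N, x j t ≤ U) → u i t ≤ G * (U - x i t)
  drift_le_of_pull : ∀ i ∈ N, ∀ t U c, 0 ≤ t → (∀ j ∈ N, x j t ≤ U) →
    ∀ T ⊆ N, T ⊆ Nin i → F i < #T → (∀ j ∈ T, x j t ≤ c) → c < x i t →
      u i t ≤ α * (c - x i t) + G * (U - x i t)

/-- The length of a time window in which an agent approaching `U` at rate at most `G` keeps half of
its distance to `U`. -/
noncomputable def window (G : ℝ) : ℝ := 1 / (2 * G)

/-- The fraction `ρ` of the distance `δ` that an agent with more than `F i` in-neighbors at distance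
`δ` below `U` is sure to gain within one window. -/
noncomputable def gapFactor (α G : ℝ) : ℝ := α / (16 * (α + G))

/-- The agents of `N` whose state exceeds `c` at time `t`. -/
noncomputable def agentsAbove {ι : Type*} (N : Finset ι) (x : ι → ℝ → ℝ) (c t : ℝ) : Finset ι :=
  {i ∈ N | c < x i t}

/-- Some agent of `S` has more than its threshold of in-neighbors in `N` outside `S`. -/
def ThresholdReachable {ι : Type*} [DecidableEq ι] (Nin : ι → Finset ι) (N : Finset ι) (F : ι → ℕ)
    (S : Finset ι) : Prop :=
  ∃ i ∈ S, F i < #((Nin i ∩ N) \ S)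

/-- Of any two nonempty disjoint subsets of `N`, at least one is threshold reachable: the
consequence of fractional robustness that survives the adversaries. -/
def ThresholdRobust {ι : Type*} [DecidableEq ι] (Nin : ι → Finset ι) (N : Finset ι) (F : ι → ℕ) :
    Prop :=
  ∀ S₁ ⊆ N, ∀ S₂ ⊆ N, S₁.Nonempty → S₂.Nonempty → Disjoint S₁ S₂ →
    ThresholdReachable Nin N F S₁ ∨ ThresholdReachable Nin N F S₂

lemma window_pos {G : ℝ} (hG : 0 < G) : 0 < window G := by
  unfold window; positivity

lemma mul_window {G : ℝ} (hG : 0 < G) : G * window G = 1 / 2 := by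
  unfold window; field_simp

lemma gapFactor_pos {α G : ℝ} (hα : 0 < α) (hG : 0 < G) : 0 < gapFactor α G := by
  unfold gapFactor; positivity

lemma gapFactor_mul {α G : ℝ} (hα : 0 < α) (hG : 0 < G) : gapFactor α G * (α + G) = α / 16 := by
  unfold gapFactor; field_simp

lemma gapFactor_le {α G : ℝ} (hα : 0 < α) (hG : 0 < G) : gapFactor α G ≤ 1 / 16 := by
  unfold gapFactor
  rw [div_le_div_iff₀ (by positivity) (by norm_num)]
  linarith

lemma agentsAbove_subset {ι : Type*} (N : Finset ι) (x : ι → ℝ → ℝ) (c t : ℝ) :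
    agentsAbove N x c t ⊆ N :=
  filter_subset _ _

lemma mem_agentsAbove {ι : Type*} {N : Finset ι} {x : ι → ℝ → ℝ} {c t : ℝ} {i : ι} :
    i ∈ agentsAbove N x c t ↔ i ∈ N ∧ c < x i t :=
  mem_filter

lemma disjoint_agentsAbove_neg {ι : Type*} {N : Finset ι} {x : ι → ℝ → ℝ} {c d t : ℝ}
    (hcd : 0 ≤ c + d) : Disjoint (agentsAbove N x c t) (agentsAbove N (-x) d t) := by
  refine disjoint_left.2 fun i hc hd => ?_
  have hc' := (mem_agentsAbove.1 hc).2
  have hd' : d < -x i t := (mem_agentsAbove.1 hd).2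
  linarith

namespace UpperDriftBound

variable {ι : Type*} {N : Finset ι} {Nin : ι → Finset ι} {F : ι → ℕ} {α G : ℝ}
  {x u : ι → ℝ → ℝ} {a t U δ : ℝ} {i : ι}

/-- If the states first reached their maximum `W > U` over `[a, b]` at time `s`, by agent `i`, then
during the last window before `s` agent `i` would have covered its whole distance to `W`, but in
that time it covers at most half of it. -/
theorem forall_le (h : UpperDriftBound N Nin F α G x u) (ha : 0 ≤ a) (hU : ∀ i ∈ N, x i a ≤ U) :
    ∀ i ∈ N, ∀ t, a ≤ t → x i t ≤ U := by
  intro i₀ hi₀ b hab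
  have hN : N.Nonempty := ⟨i₀, hi₀⟩
  obtain ⟨s, hs, hmax, hfirst⟩ := exists_first_isMaxOn hab
    (ContinuousOn.finset_sup'_apply hN fun i hi => (h.isSolution i hi).continuousOn ha)
  obtain ⟨i, hi, hW⟩ := exists_mem_eq_sup' hN fun i => x i s
  have hle : ∀ j ∈ N, ∀ r ∈ Set.Icc a b, x j r ≤ x i s := fun j hj r hr =>
    (le_sup' (fun j => x j r) hj).trans ((hmax hr).trans_eq hW)
  refine (hle i₀ hi₀ b ⟨hab, le_rfl⟩).trans ?_
  by_contra! hUW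
  have has : a < s := hs.1.lt_of_ne (by rintro rfl; exact (hU i hi).not_gt hUW)
  set r := max a (s - window G)
  have hrs : r < s := max_lt has (sub_lt_self s (window_pos h.rate_pos))
  have hra : a ≤ r := le_max_left _ _
  have hlt : x i r < x i s := by
    have := hfirst r ⟨hra, hrs⟩
    rw [hW] at this
    exact (le_sup' (fun j => x j r) hi).trans_lt this
  have hG := h.rate_pos
  have hstep : x i s ≤ x i r + G * (x i s - x i r) * (s - r) := by
    refine (h.isSolution i hi).le_add_mul_of_lt_imp_le (ha.trans hra) hrs.le
      (mul_nonneg hG.le (sub_nonneg.2 hlt.le)) le_rfl fun q hq hxq => ?_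
    have hq' : q ∈ Set.Icc a b := ⟨hra.trans hq.1, hq.2.trans hs.2⟩
    calc u i q ≤ G * (x i s - x i q) :=
          h.drift_le i hi q _ (ha.trans hq'.1) fun j hj => hle j hj q hq'
      _ ≤ G * (x i s - x i r) := by gcongr
  have hhalf : G * (s - r) ≤ 1 / 2 := by
    rw [← mul_window hG]
    gcongr
    linarith [le_max_right a (s - window G)]
  nlinarith

lemma le_sub_half (h : UpperDriftBound N Nin F α G x u) (ha : 0 ≤ a) (hU : ∀ i ∈ N, x i a ≤ U)
    (hδ : 0 ≤ δ) (ht : t ∈ Set.Icc a (a + window G)) (hi : i ∈ N) (hx : x i a ≤ U - δ) :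
    x i t ≤ U - δ / 2 := by
  have hG := h.rate_pos
  have hgrow : x i t ≤ U - δ + G * δ * (t - a) := by
    refine (h.isSolution i hi).le_add_mul_of_lt_imp_le ha ht.1 (by positivity) hx
      fun s hs hxs => ?_
    calc u i s ≤ G * (U - x i s) :=
          h.drift_le i hi s U (ha.trans hs.1) fun j hj => h.forall_le ha hU j hj s hs.1
      _ ≤ G * δ := by gcongr; linarith
  have hhalf : G * (t - a) ≤ 1 / 2 := by
    rw [← mul_window hG]
    gcongr
    linarith [ht.2]
  nlinarith

/-- Otherwise the drift of agent `i` would stay below `-(3 / 8) α δ` for a whole window. -/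
lemma exists_le_sub_of_pull (h : UpperDriftBound N Nin F α G x u) (ha : 0 ≤ a)
    (hU : ∀ i ∈ N, x i a ≤ U) (hδ : 0 ≤ δ) (hi : i ∈ N) {T : Finset ι} (hTN : T ⊆ N)
    (hTi : T ⊆ Nin i) (hT : F i < #T) (hx : ∀ j ∈ T, x j a ≤ U - δ) :
    ∃ s ∈ Set.Icc a (a + window G), x i s ≤ U - 2 * gapFactor α G * δ := by
  by_contra! hfar
  have hα := h.pull_pos
  have hG := h.rate_pos
  have hτ := window_pos hG
  have hρδ : gapFactor α G * δ ≤ 1 / 16 * δ := by gcongr; exact gapFactor_le hα hG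
  have hdrift : ∀ s ∈ Set.Ioo a (a + window G), u i s ≤ -(3 / 8 * α * δ) := by
    intro s hs
    have hs' := Set.Ioo_subset_Icc_self hs
    have hfar_s := hfar s hs'
    have hpull : u i s ≤ α * (U - δ / 2 - x i s) + G * (U - x i s) :=
      h.drift_le_of_pull i hi s U _ (ha.trans hs'.1)
        (fun j hj => h.forall_le ha hU j hj s hs'.1) T hTN hTi hT
        (fun j hj => h.le_sub_half ha hU hδ hs' (hTN hj) (hx j hj)) (by linarith)
    calc u i s ≤ (α + G) * (U - x i s) - α * δ / 2 := by linarith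
      _ ≤ (α + G) * (2 * gapFactor α G * δ) - α * δ / 2 := by gcongr; linarith
      _ = 2 * (gapFactor α G * (α + G)) * δ - α * δ / 2 := by ring
      _ = -(3 / 8 * α * δ) := by rw [gapFactor_mul hα hG]; ring
  have hend := (h.isSolution i hi).le_add_mul ha (by linarith) hdrift
  have hfar_end := hfar (a + window G) ⟨by linarith, le_rfl⟩
  have hgap : 2 * gapFactor α G ≤ 3 / 8 * α * window G := by
    refine le_of_mul_le_mul_right ?_ hG
    nlinarith [gapFactor_mul hα hG, mul_window hG, gapFactor_pos hα hG]
  have hgapδ := mul_le_mul_of_nonneg_right hgap hδ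
  linarith [hU i hi]

lemma le_sub_of_pull (h : UpperDriftBound N Nin F α G x u) (ha : 0 ≤ a)
    (hU : ∀ i ∈ N, x i a ≤ U) (hδ : 0 ≤ δ) (hi : i ∈ N) {T : Finset ι} (hTN : T ⊆ N)
    (hTi : T ⊆ Nin i) (hT : F i < #T) (hx : ∀ j ∈ T, x j a ≤ U - δ) :
    x i (a + window G) ≤ U - gapFactor α G * δ := by
  obtain ⟨s, hs, hxs⟩ := h.exists_le_sub_of_pull ha hU hδ hi hTN hTi hT hx
  have hρ := gapFactor_pos h.pull_pos h.rate_pos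
  have hhalf := h.le_sub_half (ha.trans hs.1) (fun j hj => h.forall_le ha hU j hj s hs.1)
    (by positivity) ⟨hs.2, by linarith [hs.1]⟩ hi hxs
  linarith

lemma agentsAbove_subset_agentsAbove (h : UpperDriftBound N Nin F α G x u) (ha : 0 ≤ a)
    (hU : ∀ i ∈ N, x i a ≤ U) (hδ : 0 ≤ δ) :
    agentsAbove N x (U - gapFactor α G * δ) (a + window G) ⊆ agentsAbove N x (U - δ) a := by
  intro i hi
  obtain ⟨hiN, hlt⟩ := mem_agentsAbove.1 hi
  refine mem_agentsAbove.2 ⟨hiN, ?_⟩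
  by_contra! hle
  have hhalf := h.le_sub_half ha hU hδ
    ⟨le_add_of_nonneg_right (window_pos h.rate_pos).le, le_rfl⟩ hiN hle
  nlinarith [gapFactor_le h.pull_pos h.rate_pos]

lemma agentsAbove_ssubset_agentsAbove [DecidableEq ι] (h : UpperDriftBound N Nin F α G x u)
    (ha : 0 ≤ a) (hU : ∀ i ∈ N, x i a ≤ U) (hδ : 0 ≤ δ)
    (hreach : ThresholdReachable Nin N F (agentsAbove N x (U - δ) a)) :
    agentsAbove N x (U - gapFactor α G * δ) (a + window G) ⊂ agentsAbove N x (U - δ) a := by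
  obtain ⟨i, hi, hcard⟩ := hreach
  refine (ssubset_iff_of_subset (h.agentsAbove_subset_agentsAbove ha hU hδ)).2
    ⟨i, hi, fun hi' => ?_⟩
  have hsub : (Nin i ∩ N) \ agentsAbove N x (U - δ) a ⊆ Nin i ∩ N := sdiff_subset
  refine (mem_agentsAbove.1 hi').2.not_ge (h.le_sub_of_pull ha hU hδ (mem_agentsAbove.1 hi).1
    (hsub.trans inter_subset_right) (hsub.trans inter_subset_left) hcard fun j hj => ?_)
  by_contra! hlt
  exact (mem_sdiff.1 hj).2 (mem_agentsAbove.2 ⟨inter_subset_right (hsub hj), hlt⟩)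

end UpperDriftBound

section Consensus

variable {ι : Type*} {N : Finset ι} {Nin : ι → Finset ι} {F : ι → ℕ} {α G : ℝ}
  {x u v : ι → ℝ → ℝ} {a L U : ℝ}

theorem mem_Icc_of_upperDriftBound (hup : UpperDriftBound N Nin F α G x u)
    (hlow : UpperDriftBound N Nin F α G (-x) v) (ha : 0 ≤ a)
    (hx : ∀ i ∈ N, x i a ∈ Set.Icc L U) : ∀ i ∈ N, ∀ t, a ≤ t → x i t ∈ Set.Icc L U :=
  fun i hi t ht =>
    ⟨neg_le_neg_iff.1 (hlow.forall_le ha (fun j hj => neg_le_neg (hx j hj).1) i hi t ht),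
      hup.forall_le ha (fun j hj => (hx j hj).2) i hi t ht⟩

variable [DecidableEq ι]

lemma agentsAbove_eq_empty_or_eq_empty (hup : UpperDriftBound N Nin F α G x u)
    (hlow : UpperDriftBound N Nin F α G (-x) v) (hrobust : ThresholdRobust Nin N F) (ha : 0 ≤ a)
    (hLU : L ≤ U) (hx : ∀ i ∈ N, x i a ∈ Set.Icc L U) :
    agentsAbove N x (U - gapFactor α G ^ #N * ((U - L) / 2)) (a + #N * window G) = ∅ ∨
      agentsAbove N (-x) (-L - gapFactor α G ^ #N * ((U - L) / 2)) (a + #N * window G) = ∅ := by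
  have hρ := gapFactor_pos hup.pull_pos hup.rate_pos
  have hρ1 := gapFactor_le hup.pull_pos hup.rate_pos
  have hτ := window_pos hup.rate_pos
  set ρ := gapFactor α G
  set τ := window G
  set δ : ℕ → ℝ := fun k => ρ ^ k * ((U - L) / 2) with hδ_def
  have hδ : ∀ k, 0 ≤ δ k := fun k => mul_nonneg (pow_nonneg hρ.le k) (by linarith)
  have hδ_le : ∀ k, δ k ≤ (U - L) / 2 := fun k =>
    mul_le_of_le_one_left (by linarith) (pow_le_one₀ hρ.le (by linarith))
  have hδ_succ : ∀ k, δ (k + 1) = ρ * δ k := fun k => by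
    simp only [hδ_def, pow_succ', mul_assoc]
  have htime : ∀ k : ℕ, a + ↑(k + 1) * τ = a + k * τ + τ := fun k => by push_cast; ring
  have ht : ∀ k : ℕ, a ≤ a + k * τ := fun k => le_add_of_nonneg_right (by positivity)
  have hmem := mem_Icc_of_upperDriftBound hup hlow ha hx
  have hU : ∀ k : ℕ, ∀ i ∈ N, x i (a + k * τ) ≤ U := fun k i hi => (hmem i hi _ (ht k)).2
  have hL : ∀ k : ℕ, ∀ i ∈ N, (-x) i (a + k * τ) ≤ -L := fun k i hi =>
    neg_le_neg (hmem i hi _ (ht k)).1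
  have hdisj : ∀ k : ℕ, Disjoint (agentsAbove N x (U - δ k) (a + k * τ))
      (agentsAbove N (-x) (-L - δ k) (a + k * τ)) := fun k =>
    disjoint_agentsAbove_neg (by linarith [hδ_le k])
  refine eq_empty_or_eq_empty_of_ssubset
    (A := fun k => agentsAbove N x (U - δ k) (a + k * τ))
    (B := fun k => agentsAbove N (-x) (-L - δ k) (a + k * τ)) ?_ ?_ ?_ ?_
  · intro k
    simp only [hδ_succ, htime]
    exact hup.agentsAbove_subset_agentsAbove (ha.trans (ht k)) (hU k) (hδ k)
  · intro k
    simp only [hδ_succ, htime]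
    exact hlow.agentsAbove_subset_agentsAbove (ha.trans (ht k)) (hL k) (hδ k)
  · intro k hA hB
    simp only [hδ_succ, htime]
    exact (hrobust _ (agentsAbove_subset ..) _ (agentsAbove_subset ..) hA hB (hdisj k)).imp
      (hup.agentsAbove_ssubset_agentsAbove (ha.trans (ht k)) (hU k) (hδ k))
      (hlow.agentsAbove_ssubset_agentsAbove (ha.trans (ht k)) (hL k) (hδ k))
  · rw [← card_union_of_disjoint (hdisj 0)]
    exact card_le_card (union_subset (agentsAbove_subset ..) (agentsAbove_subset ..))

lemma exists_contracted_Icc (hup : UpperDriftBound N Nin F α G x u)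
    (hlow : UpperDriftBound N Nin F α G (-x) v) (hrobust : ThresholdRobust Nin N F) (ha : 0 ≤ a)
    (hLU : L ≤ U) (hx : ∀ i ∈ N, x i a ∈ Set.Icc L U) :
    ∃ L' U', L' ≤ U' ∧ (∀ i ∈ N, x i (a + #N * window G) ∈ Set.Icc L' U') ∧
      U' - L' = (1 - gapFactor α G ^ #N / 2) * (U - L) := by
  have hρ := gapFactor_pos hup.pull_pos hup.rate_pos
  have hρ1 := gapFactor_le hup.pull_pos hup.rate_pos
  have hδ : gapFactor α G ^ #N * ((U - L) / 2) ≤ (U - L) / 2 :=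
    mul_le_of_le_one_left (by linarith) (pow_le_one₀ hρ.le (by linarith))
  have ht : a ≤ a + #N * window G :=
    le_add_of_nonneg_right (mul_nonneg (Nat.cast_nonneg _) (window_pos hup.rate_pos).le)
  have hmem : ∀ i ∈ N, x i (a + #N * window G) ∈ Set.Icc L U := fun i hi =>
    mem_Icc_of_upperDriftBound hup hlow ha hx i hi _ ht
  rcases agentsAbove_eq_empty_or_eq_empty hup hlow hrobust ha hLU hx with hempty | hempty
  · refine ⟨L, U - gapFactor α G ^ #N * ((U - L) / 2), by linarith,
      fun i hi => ⟨(hmem i hi).1, ?_⟩, by ring⟩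
    exact not_lt.1 (filter_eq_empty_iff.1 hempty hi)
  · refine ⟨L + gapFactor α G ^ #N * ((U - L) / 2), U, by linarith,
      fun i hi => ⟨?_, (hmem i hi).2⟩, by ring⟩
    have : -x i (a + #N * window G) ≤ _ := not_lt.1 (filter_eq_empty_iff.1 hempty hi)
    linarith

lemma exists_Icc_sub_eq_pow_mul (hup : UpperDriftBound N Nin F α G x u)
    (hlow : UpperDriftBound N Nin F α G (-x) v) (hrobust : ThresholdRobust Nin N F)
    (hLU : L ≤ U) (hx : ∀ i ∈ N, x i 0 ∈ Set.Icc L U) (k : ℕ) :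
    ∃ L' U', L' ≤ U' ∧ (∀ i ∈ N, x i (k * (#N * window G)) ∈ Set.Icc L' U') ∧
      U' - L' = (1 - gapFactor α G ^ #N / 2) ^ k * (U - L) := by
  induction k with
  | zero => exact ⟨L, U, hLU, by simpa only [Nat.cast_zero, zero_mul] using hx, by simp⟩
  | succ k ih =>
    obtain ⟨L₁, U₁, hLU₁, hx₁, hwidth₁⟩ := ih
    have hτ := window_pos hup.rate_pos
    obtain ⟨L₂, U₂, hLU₂, hx₂, hwidth₂⟩ :=
      exists_contracted_Icc hup hlow hrobust (by positivity) hLU₁ hx₁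
    refine ⟨L₂, U₂, hLU₂, ?_, by rw [hwidth₂, hwidth₁, pow_succ', mul_assoc]⟩
    rwa [Nat.cast_succ, add_one_mul]

theorem exists_tendsto_of_thresholdRobust (hup : UpperDriftBound N Nin F α G x u)
    (hlow : UpperDriftBound N Nin F α G (-x) v) (hrobust : ThresholdRobust Nin N F)
    (hN : N.Nonempty) : ∃ l, ∀ i ∈ N, Tendsto (x i) atTop (𝓝 l) := by
  obtain ⟨i₀, hi₀⟩ := hN
  set L := N.inf' ⟨i₀, hi₀⟩ fun i => x i 0
  set U := N.sup' ⟨i₀, hi₀⟩ fun i => x i 0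
  have hx : ∀ i ∈ N, x i 0 ∈ Set.Icc L U := fun i hi =>
    ⟨inf'_le (fun i => x i 0) hi, le_sup' (fun i => x i 0) hi⟩
  have hρ := gapFactor_pos hup.pull_pos hup.rate_pos
  have hρ1 : gapFactor α G ≤ 1 := (gapFactor_le hup.pull_pos hup.rate_pos).trans (by norm_num)
  have hτ := window_pos hup.rate_pos
  set q := 1 - gapFactor α G ^ #N / 2 with hq
  have hq0 : 0 ≤ q := by linarith [pow_le_one₀ hρ.le hρ1 (n := #N)]
  have hq1 : q < 1 := by linarith [pow_pos hρ #N]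
  have hlim : Tendsto (fun k : ℕ => q ^ k * (U - L)) atTop (𝓝 0) := by
    simpa only [zero_mul] using (tendsto_pow_atTop_nhds_zero_of_lt_one hq0 hq1).mul_const (U - L)
  refine exists_tendsto_of_forall_dist_lt (s := (N : Set ι)) (x := x) ⟨i₀, hi₀⟩
    fun ε hε => ?_
  obtain ⟨k, hk⟩ := (hlim.eventually_lt_const hε).exists
  obtain ⟨L', U', -, hx', hwidth⟩ := exists_Icc_sub_eq_pow_mul hup hlow hrobust
    ((hx i₀ hi₀).1.trans (hx i₀ hi₀).2) hx k
  have hmem := mem_Icc_of_upperDriftBound hup hlow (by positivity) hx'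
  exact ⟨_, fun i hi j hj t ht t' ht' =>
    (Real.dist_le_of_mem_Icc (hmem i hi t ht) (hmem j hj t' ht')).trans_lt (hwidth.trans_lt hk)⟩

end Consensus

section Removal

variable {n : ℕ} {Nin N R T : Finset (Fin n)} {v w : Fin n → ℝ} {xi U c α G : ℝ} {F : ℕ}

lemma RemovalHigh.lt_of_mem (h : RemovalHigh Nin v xi F R) {j : Fin n} (hj : j ∈ R) :
    xi < v j := by
  obtain ⟨-, ⟨-, rfl⟩ | ⟨hF, hcard, hlargest⟩⟩ := h
  · exact (mem_filter.1 hj).2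
  by_contra! hle
  have hsub : {k ∈ Nin | xi < v k} ⊆ R.erase j := by
    intro k hk
    obtain ⟨hkN, hlt⟩ := mem_filter.1 hk
    refine mem_erase.2 ⟨by rintro rfl; exact hle.not_gt hlt, ?_⟩
    by_contra hkR
    exact (hlargest j hj k (mem_sdiff.2 ⟨hkN, hkR⟩)).not_gt (hle.trans_lt hlt)
  have := card_le_card hsub
  have := card_erase_lt_of_mem hj
  omega

lemma RemovalLow.card_le (h : RemovalLow Nin v xi F R) : #R ≤ F := by
  obtain ⟨-, ⟨hlt, rfl⟩ | ⟨-, hcard, -⟩⟩ := h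
  · exact hlt.le
  · exact hcard.le

/-- A retained value above `U` would come, like all `F` removed ones, from an adversary. -/
lemma RemovalHigh.le_of_notMem (h : RemovalHigh Nin v xi F R)
    (hlocal : #{j ∈ Nin | j ∉ N} ≤ F) (hxi : xi ≤ U) (hv : ∀ j ∈ N, v j ≤ U) {j : Fin n}
    (hj : j ∈ Nin) (hjR : j ∉ R) : v j ≤ U := by
  by_contra! hUj
  obtain ⟨hR, ⟨-, rfl⟩ | ⟨-, hcard, hlargest⟩⟩ := h
  · exact hjR (mem_filter.2 ⟨hj, hxi.trans_lt hUj⟩)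
  have hsub : insert j R ⊆ {k ∈ Nin | k ∉ N} := by
    refine insert_subset (mem_filter.2 ⟨hj, fun hN => (hv j hN).not_gt hUj⟩) fun k hk => ?_
    have hUk : U < v k := hUj.trans_le (hlargest k hk j (mem_sdiff.2 ⟨hj, hjR⟩))
    exact mem_filter.2 ⟨hR hk, fun hN => (hv k hN).not_gt hUk⟩
  have := card_le_card hsub
  rw [card_insert_of_notMem hjR] at this
  omega

lemma IsARCPRemoval.neg (h : IsARCPRemoval Nin v xi F R) : IsARCPRemoval Nin (-v) (-xi) F R := by
  obtain ⟨Rhi, Rlo, rfl, hhi, hlo⟩ := h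
  refine ⟨Rlo, Rhi, union_comm _ _, ?_, ?_⟩
  · simpa only [RemovalHigh, RemovalLow, Pi.neg_apply, neg_lt_neg_iff, neg_le_neg_iff] using hlo
  · simpa only [RemovalHigh, RemovalLow, Pi.neg_apply, neg_lt_neg_iff, neg_le_neg_iff] using hhi

lemma IsARCPRemoval.le_of_mem_sdiff (h : IsARCPRemoval Nin v xi F R)
    (hlocal : #{j ∈ Nin | j ∉ N} ≤ F) (hxi : xi ≤ U) (hv : ∀ j ∈ N, v j ≤ U) :
    ∀ j ∈ Nin \ R, v j ≤ U := by
  obtain ⟨Rhi, Rlo, rfl, hhi, -⟩ := h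
  intro j hj
  obtain ⟨hjN, hjR⟩ := mem_sdiff.1 hj
  exact hhi.le_of_notMem hlocal hxi hv hjN fun hjhi => hjR (mem_union_left _ hjhi)

lemma IsARCPRemoval.exists_mem_sdiff_of_lt_card (h : IsARCPRemoval Nin v xi F R)
    (hT : T ⊆ Nin) (hcard : F < #T) (hv : ∀ j ∈ T, v j ≤ xi) : ∃ j ∈ T, j ∈ Nin \ R := by
  obtain ⟨Rhi, Rlo, rfl, hhi, hlo⟩ := h
  obtain ⟨j, hjT, hjlo⟩ := exists_mem_notMem_of_card_lt_card (hlo.card_le.trans_lt hcard)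
  refine ⟨j, hjT, mem_sdiff.2 ⟨hT hjT, ?_⟩⟩
  exact notMem_union.2 ⟨fun hjhi => (hv j hjT).not_gt (hhi.lt_of_mem hjhi), hjlo⟩

lemma arcpUpdate_neg : arcpUpdate Nin R w (-v) (-xi) = -arcpUpdate Nin R w v xi := by
  simp only [arcpUpdate, Pi.neg_apply, ← neg_sub', mul_neg, sum_neg_distrib]

lemma sum_mul_sub_le {ι : Type*} {S : Finset ι} {w v : ι → ℝ} {xi U G : ℝ}
    (hw : ∀ j ∈ S, 0 ≤ w j) (hG : ∑ j ∈ S, w j ≤ G) (hv : ∀ j ∈ S, v j ≤ U) (hxi : xi ≤ U) :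
    ∑ j ∈ S, w j * (v j - xi) ≤ G * (U - xi) := calc
  ∑ j ∈ S, w j * (v j - xi) ≤ ∑ j ∈ S, w j * (U - xi) :=
    sum_le_sum fun j hj => mul_le_mul_of_nonneg_left (sub_le_sub_right (hv j hj) xi) (hw j hj)
  _ = (∑ j ∈ S, w j) * (U - xi) := (sum_mul ..).symm
  _ ≤ G * (U - xi) := by gcongr

lemma IsARCPRemoval.arcpUpdate_le (h : IsARCPRemoval Nin v xi F R)
    (hlocal : #{j ∈ Nin | j ∉ N} ≤ F) (hw : ∀ j ∈ Nin, 0 ≤ w j) (hG : ∑ j ∈ Nin, w j ≤ G)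
    (hxi : xi ≤ U) (hv : ∀ j ∈ N, v j ≤ U) : arcpUpdate Nin R w v xi ≤ G * (U - xi) :=
  sum_mul_sub_le (fun j hj => hw j (sdiff_subset hj))
    ((sum_le_sum_of_subset_of_nonneg sdiff_subset fun j hj _ => hw j hj).trans hG)
    (h.le_of_mem_sdiff hlocal hxi hv) hxi

lemma IsARCPRemoval.arcpUpdate_le_of_lt_card (h : IsARCPRemoval Nin v xi F R)
    (hlocal : #{j ∈ Nin | j ∉ N} ≤ F) (hα : 0 ≤ α) (hw : ∀ j ∈ Nin, α ≤ w j)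
    (hG : ∑ j ∈ Nin, w j ≤ G) (hxi : xi ≤ U) (hv : ∀ j ∈ N, v j ≤ U) (hT : T ⊆ Nin)
    (hcard : F < #T) (hTc : ∀ j ∈ T, v j ≤ c) (hc : c < xi) :
    arcpUpdate Nin R w v xi ≤ α * (c - xi) + G * (U - xi) := by
  obtain ⟨j, hjT, hj⟩ :=
    h.exists_mem_sdiff_of_lt_card hT hcard fun k hk => (hTc k hk).trans hc.le
  have hrest : (Nin \ R).erase j ⊆ Nin := (erase_subset _ _).trans sdiff_subset
  have hw0 : ∀ k ∈ Nin, 0 ≤ w k := fun k hk => hα.trans (hw k hk)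
  rw [arcpUpdate, ← add_sum_erase _ _ hj]
  gcongr ?_ + ?_
  · calc w j * (v j - xi) ≤ w j * (c - xi) :=
          mul_le_mul_of_nonneg_left (sub_le_sub_right (hTc j hjT) xi) (hw0 j (hT hjT))
      _ ≤ α * (c - xi) := mul_le_mul_of_nonpos_right (hw j (hT hjT)) (by linarith)
  · exact sum_mul_sub_le (fun k hk => hw0 k (hrest hk))
      ((sum_le_sum_of_subset_of_nonneg hrest fun k hk _ => hw0 k hk).trans hG)
      (fun k hk => h.le_of_mem_sdiff hlocal hxi hv k (erase_subset _ _ hk)) hxi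

end Removal

/-- The normal agents `N` run ARC-P with thresholds `F` from time `0` on: `xc j i` is the value that
`j` conveys to `i`, and `R t i` the set of in-neighbors that `i` discards at time `t`. Nothing is
required of the values conveyed by the other agents. -/
structure IsARCPSolution {n : ℕ} (Nin : Fin n → Finset (Fin n)) (N : Finset (Fin n))
    (F : Fin n → ℕ) (w : ℝ → Fin n → Fin n → ℝ) (x : Fin n → ℝ → ℝ) (xc : Fin n → Fin n → ℝ → ℝ)
    (R : ℝ → Fin n → Finset (Fin n)) : Prop where
  conveyed_eq : ∀ j ∈ N, ∀ i, xc j i = x j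
  isARCPRemoval : ∀ t, 0 ≤ t → ∀ i ∈ N,
    IsARCPRemoval (Nin i) (fun j => xc j i t) (x i t) (F i) (R t i)
  isSolution : ∀ i ∈ N, IsCaratheodorySolution (x i) fun t =>
    arcpUpdate (Nin i) (R t i) (fun j => w t j i) (fun j => xc j i t) (x i t)

namespace IsARCPSolution

variable {n : ℕ} {Nin : Fin n → Finset (Fin n)} {N : Finset (Fin n)} {F : Fin n → ℕ}
  {w : ℝ → Fin n → Fin n → ℝ} {x : Fin n → ℝ → ℝ} {xc : Fin n → Fin n → ℝ → ℝ}
  {R : ℝ → Fin n → Finset (Fin n)} {α G : ℝ}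

lemma neg (h : IsARCPSolution Nin N F w x xc R) : IsARCPSolution Nin N F w (-x) (-xc) R where
  conveyed_eq j hj i := congrArg Neg.neg (h.conveyed_eq j hj i)
  isARCPRemoval t ht i hi := (h.isARCPRemoval t ht i hi).neg
  isSolution i hi :=
    (congrArg (IsCaratheodorySolution (-x i)) (funext fun _ => arcpUpdate_neg)).mpr
      (h.isSolution i hi).neg

lemma upperDriftBound (h : IsARCPSolution Nin N F w x xc R)
    (hlocal : ∀ i ∈ N, #{j ∈ Nin i | j ∉ N} ≤ F i) (hα : 0 < α) (hG0 : 0 < G)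
    (hw : ∀ t, 0 ≤ t → ∀ i ∈ N, ∀ j ∈ Nin i, α ≤ w t j i)
    (hG : ∀ t, 0 ≤ t → ∀ i ∈ N, ∑ j ∈ Nin i, w t j i ≤ G) :
    UpperDriftBound N Nin F α G x fun i t =>
      arcpUpdate (Nin i) (R t i) (fun j => w t j i) (fun j => xc j i t) (x i t) where
  pull_pos := hα
  rate_pos := hG0
  isSolution := h.isSolution
  drift_le i hi t _ ht hU :=
    (h.isARCPRemoval t ht i hi).arcpUpdate_le (hlocal i hi)
      (fun j hj => hα.le.trans (hw t ht i hi j hj)) (hG t ht i hi) (hU i hi)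
      fun j hj => (congrFun (h.conveyed_eq j hj i) t).trans_le (hU j hj)
  drift_le_of_pull i hi t _ _ ht hU _ hTN hTi hT hTc hc :=
    (h.isARCPRemoval t ht i hi).arcpUpdate_le_of_lt_card (hlocal i hi) hα.le (hw t ht i hi)
      (hG t ht i hi) (hU i hi)
      (fun j hj => (congrFun (h.conveyed_eq j hj i) t).trans_le (hU j hj)) hTi hT
      (fun j hj => (congrFun (h.conveyed_eq j (hTN hj) i) t).trans_le (hTc j hj)) hc

end IsARCPSolution

lemma FracEdgeReachable.thresholdReachable {n : ℕ} {Nin : Fin n → Finset (Fin n)}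
    {N S : Finset (Fin n)} {f p : ℝ} (h : FracEdgeReachable Nin p S) (hf : 0 ≤ f) (hp : 2 * f < p)
    (hlocal : ∀ i ∈ S, #{j ∈ Nin i | j ∉ N} ≤ ⌊f * (#(Nin i) : ℝ)⌋₊) :
    ThresholdReachable Nin N (fun i => ⌊f * (#(Nin i) : ℝ)⌋₊) S := by
  obtain ⟨i, hi, hdeg, hout⟩ | ⟨rfl, -⟩ := h
  swap
  · linarith
  refine ⟨i, hi, show ⌊f * (#(Nin i) : ℝ)⌋₊ < #((Nin i ∩ N) \ S) from ?_⟩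
  have hsplit : #(Nin i \ S) ≤ #((Nin i ∩ N) \ S) + #{j ∈ Nin i | j ∉ N} := by
    refine (card_le_card fun j hj => ?_).trans (card_union_le _ _)
    simp only [mem_union, Finset.mem_sdiff, Finset.mem_inter, mem_filter] at hj ⊢
    tauto
  have htwice : 2 * ⌊f * (#(Nin i) : ℝ)⌋₊ < ⌈p * (#(Nin i) : ℝ)⌉₊ := by
    rw [Nat.lt_ceil, Nat.cast_mul, Nat.cast_two]
    calc 2 * (⌊f * (#(Nin i) : ℝ)⌋₊ : ℝ) ≤ 2 * (f * #(Nin i)) := by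
          gcongr; exact Nat.floor_le (by positivity)
      _ = 2 * f * #(Nin i) := by ring
      _ < p * #(Nin i) := by gcongr
  have := hlocal i hi
  omega

lemma FracRobust.thresholdRobust {n : ℕ} {Nin : Fin n → Finset (Fin n)} {N : Finset (Fin n)}
    {f p : ℝ} (h : FracRobust Nin p) (hf : 0 ≤ f) (hp : 2 * f < p)
    (hlocal : ∀ i ∈ N, #{j ∈ Nin i | j ∉ N} ≤ ⌊f * (#(Nin i) : ℝ)⌋₊) :
    ThresholdRobust Nin N fun i => ⌊f * (#(Nin i) : ℝ)⌋₊ :=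
  fun S₁ hS₁ S₂ hS₂ hne₁ hne₂ hdisj => (h S₁ S₂ hne₁ hne₂ hdisj).imp
    (fun hr => hr.thresholdReachable hf hp fun i hi => hlocal i (hS₁ hi))
    (fun hr => hr.thresholdReachable hf hp fun i hi => hlocal i (hS₂ hi))

end ARCP

theorem stmt6_general {n : ℕ} {Nin : Fin n → Finset (Fin n)} {Normal : Finset (Fin n)}
    (hNe : Normal.Nonempty) {f p : ℝ} (hf0 : 0 ≤ f) (hp : 2 * f < p)
    (hrobust : ARCP.FracRobust Nin p)
    (hlocal : ∀ i ∈ Normal, #{j ∈ Nin i | j ∉ Normal} ≤ ⌊f * (#(Nin i) : ℝ)⌋₊)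
    {α β : ℝ} (hα : 0 < α) (hαβ : α ≤ β) {w : ℝ → Fin n → Fin n → ℝ}
    (hw : ∀ t, 0 ≤ t → ∀ i ∈ Normal, ∀ j ∈ Nin i, α ≤ w t j i ∧ w t j i ≤ β)
    {x : Fin n → ℝ → ℝ} {xc : Fin n → Fin n → ℝ → ℝ} {R : ℝ → Fin n → Finset (Fin n)}
    (h : ARCP.IsARCPSolution Nin Normal (fun i => ⌊f * (#(Nin i) : ℝ)⌋₊) w x xc R) :
    (∃ L : ℝ, ∀ i ∈ Normal, Tendsto (x i) atTop (𝓝 L)) ∧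
    (∀ i ∈ Normal, ∀ t : ℝ, 0 ≤ t → x i t ∈ Set.Icc
      (Normal.inf' hNe fun j => x j 0) (Normal.sup' hNe fun j => x j 0)) := by
  have hβ : 0 < β := hα.trans_le hαβ
  have hn : 0 < (n : ℝ) := Nat.cast_pos.2 hNe.choose.pos
  have hsum : ∀ t, 0 ≤ t → ∀ i ∈ Normal, ∑ j ∈ Nin i, w t j i ≤ n * β := fun t ht i hi =>
    calc ∑ j ∈ Nin i, w t j i ≤ #(Nin i) • β :=
          sum_le_card_nsmul _ _ _ fun j hj => (hw t ht i hi j hj).2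
      _ ≤ n * β := by rw [nsmul_eq_mul]; gcongr; exact card_finset_fin_le _
  have hup := h.upperDriftBound hlocal hα (mul_pos hn hβ)
    (fun t ht i hi j hj => (hw t ht i hi j hj).1) hsum
  have hlow := h.neg.upperDriftBound hlocal hα (mul_pos hn hβ)
    (fun t ht i hi j hj => (hw t ht i hi j hj).1) hsum
  exact ⟨ARCP.exists_tendsto_of_thresholdRobust hup hlow
      (hrobust.thresholdRobust hf0 hp hlocal) hNe,
    ARCP.mem_Icc_of_upperDriftBound hup hlow le_rfl fun i hi =>
      ⟨inf'_le (fun j => x j 0) hi, le_sup' (fun j => x j 0) hi⟩⟩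

/-- Theorem 2 of the paper, sufficiency for time-invariant networks:
under the `f`-fraction local Byzantine model, with every normal node running ARC-P with
parameter `f ∈ [0,1/2)`, if the time-invariant digraph is `p`-fraction robust for some
`p` with `2f < p ≤ 1`, then CTRAC is achieved: the normal states converge to a common
limit and remain in `[m_N(0), M_N(0)]`. -/
theorem stmt6 {n : ℕ}
    (Nin : Fin n → Finset (Fin n))
    (Normal : Finset (Fin n)) (hNe : Normal.Nonempty)
    (f p : ℝ) (hf0 : 0 ≤ f) (hf : f < 1 / 2) (hp : 2 * f < p) (hp1 : p ≤ 1)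
    (hrobust : ARCP.FracRobust Nin p)
    -- the adversary set (the non-normal agents) is an f-fraction local set
    (hlocal : ∀ i ∈ Normal,
      ((Nin i).filter fun j => j ∉ Normal).card ≤ ⌊f * (((Nin i).card : ℝ))⌋₊)
    (α β : ℝ) (hα : 0 < α) (hαβ : α ≤ β)
    (w : ℝ → Fin n → Fin n → ℝ)
    (hw : ∀ t : ℝ, ∀ i ∈ Normal, ∀ j ∈ Nin i, α ≤ w t j i ∧ w t j i ≤ β)
    (x : Fin n → ℝ → ℝ)                    -- agents' states
    (xc : Fin n → Fin n → ℝ → ℝ)           -- value conveyed by j intended for i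
    (hxc : ∀ j ∈ Normal, ∀ i, xc j i = x j)  -- normal agents convey their own state
    (hbyz : ∀ j i, Continuous (xc j i))    -- Byzantine trajectories are continuous
    (R : ℝ → Fin n → Finset (Fin n))
    -- R t i is a valid ARC-P removal with parameter f
    (hR : ∀ t : ℝ, ∀ i ∈ Normal, ARCP.IsARCPRemoval (Nin i) (fun j => xc j i t) (x i t)
      (⌊f * (((Nin i).card : ℝ))⌋₊) (R t i))
    -- Carathéodory solution (integral form) for each normal agent
    (hint : ∀ i ∈ Normal, ∀ t : ℝ, 0 ≤ t → IntervalIntegrable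
      (fun s => ARCP.arcpUpdate (Nin i) (R s i) (fun j => w s j i)
        (fun j => xc j i s) (x i s)) volume 0 t)
    (hsol : ∀ i ∈ Normal, ∀ t : ℝ, 0 ≤ t → x i t = x i 0 + ∫ s in (0 : ℝ)..t,
      ARCP.arcpUpdate (Nin i) (R s i) (fun j => w s j i) (fun j => xc j i s) (x i s)) :
    (∃ L : ℝ, ∀ i ∈ Normal, Tendsto (x i) atTop (𝓝 L)) ∧
    (∀ i ∈ Normal, ∀ t : ℝ, 0 ≤ t → x i t ∈ Set.Icc
      (Normal.inf' hNe fun j => x j 0) (Normal.sup' hNe fun j => x j 0)) :=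
  stmt6_general hNe hf0 hp hrobust hlocal hα hαβ (fun t _ => hw t)
    ⟨hxc, fun t _ => hR t, fun i hi => ⟨hint i hi, hsol i hi⟩⟩
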